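/- arXiv:1911.05624 — 2 statements merged into one kernel-verified Lean document; each statement's English description precedes it below -/
import Mathlib

section
/- Let p* ∈ (0, 1), L > 0, δ_MAX > 0, t_1 > 0, 0 < V_MIN ≤ L(1 − p*)/(p*·δ_MAX), and let k_0 be a positive integer. Let (Δ_i) be a sequence of positive reals with Δ_i ≤ Δ_MAX for some constant Δ_MAX and Δ_i = L/V_MIN for all i ≥ k_0, and let (δ_j) be a sequence of reals with 0 < δ_j ≤ δ_MAX for all j. Define p_k = (Σ_{i=1}^k Δ_i)/(t_1 + Σ_{i=1}^k (Δ_i + δ_i)). Then liminf_{k→∞} p_k ≥ p*. -/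
open Filter

/-! A one-sided Stolz–Cesàro argument: once every cycle (a crossing and its gap) spends at
least the fraction `p*` of its length on the crossing, the quantity (crossing time) - `p*` (total
time) is eventually nondecreasing, hence bounded below by some `C`. The coverage ratio is then at
least `p* + C / (total time)`, which tends to `p*` because the total time diverges. The upper bound
on `VMIN` is exactly what makes a cycle with the longest gap `δMAX` reach the fraction `p*`. -/

theorem isBoundedUnder_ge_of_eventually_le_succ {α : Type*} [Preorder α] {u : ℕ → α}
    (hu : ∀ᶠ n in atTop, u n ≤ u (n + 1)) : IsBoundedUnder (· ≥ ·) atTop u := by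
  obtain ⟨N, hN⟩ := eventually_atTop.1 hu
  have hmono : MonotoneOn u (Set.Ici N) := monotoneOn_nat_Ici_of_le_succ hN
  exact isBoundedUnder_of_eventually_ge <|
    (eventually_ge_atTop N).mono fun _ hn => hmono Set.self_mem_Ici hn hn

theorem tendsto_sum_range_atTop_of_eventually_ge {f : ℕ → ℝ} {c : ℝ} (hc : 0 < c)
    (hf : ∀ᶠ n in atTop, c ≤ f n) :
    Tendsto (fun n => ∑ i ∈ Finset.range n, f i) atTop atTop := by
  have hbdd : IsBoundedUnder (· ≥ ·) atTop fun n : ℕ => ∑ i ∈ Finset.range n, f i - n * c :=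
    isBoundedUnder_ge_of_eventually_le_succ <| hf.mono fun n hn => by
      rw [Finset.sum_range_succ]
      push_cast
      linarith
  obtain ⟨C, hC⟩ := hbdd.eventually_ge
  have hlinear : Tendsto (fun n : ℕ => C + n * c) atTop atTop :=
    tendsto_atTop_add_const_left _ C (tendsto_natCast_atTop_atTop.atTop_mul_const hc)
  exact tendsto_atTop_mono' _ (hC.mono fun n hn => by linarith) hlinear

section Quotient

variable {ι : Type*} {l : Filter ι} {u v : ι → ℝ} {p q : ℝ}

theorem tendsto_const_add_const_div_atTop (hv : Tendsto v l atTop) (a C : ℝ) :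
    Tendsto (fun x => a + C / v x) l (nhds a) := by
  simpa only [add_zero] using (hv.const_div_atTop C).const_add a

theorem isBoundedUnder_le_div_of_isBoundedUnder_le_sub_mul (hv : Tendsto v l atTop)
    (h : IsBoundedUnder (· ≤ ·) l fun x => u x - q * v x) :
    IsBoundedUnder (· ≤ ·) l fun x => u x / v x := by
  obtain ⟨C, hC⟩ := h.eventually_le
  refine (tendsto_const_add_const_div_atTop hv q C).isBoundedUnder_le.mono_le ?_
  filter_upwards [hC, hv.eventually_gt_atTop 0] with x hx hpos
  rw [add_div' _ _ _ hpos.ne']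
  gcongr
  linarith

theorem le_liminf_div_of_isBoundedUnder_ge_sub_mul [l.NeBot] (hv : Tendsto v l atTop)
    (hlower : IsBoundedUnder (· ≥ ·) l fun x => u x - p * v x)
    (hupper : IsBoundedUnder (· ≤ ·) l fun x => u x / v x) :
    p ≤ liminf (fun x => u x / v x) l := by
  obtain ⟨C, hC⟩ := hlower.eventually_ge
  have hlim := tendsto_const_add_const_div_atTop hv p C
  rw [← hlim.liminf_eq]
  refine liminf_le_liminf ?_ hlim.isBoundedUnder_ge hupper.isCoboundedUnder_ge
  filter_upwards [hC, hv.eventually_gt_atTop 0] with x hx hpos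
  rw [add_div' _ _ _ hpos.ne']
  gcongr
  linarith

end Quotient

theorem le_liminf_div_of_eventually_mul_sub_le_sub {u v : ℕ → ℝ} {p q : ℝ}
    (hv : Tendsto v atTop atTop)
    (hlower : ∀ᶠ n in atTop, p * (v (n + 1) - v n) ≤ u (n + 1) - u n)
    (hupper : ∀ᶠ n in atTop, u (n + 1) - u n ≤ q * (v (n + 1) - v n)) :
    p ≤ liminf (fun n => u n / v n) atTop := by
  have hsub_ge : IsBoundedUnder (· ≥ ·) atTop fun n => u n - p * v n :=
    isBoundedUnder_ge_of_eventually_le_succ <| hlower.mono fun n hn => by linarith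
  have hsub_le : IsBoundedUnder (· ≤ ·) atTop fun n => u n - q * v n :=
    isBoundedUnder_ge_of_eventually_le_succ (α := ℝᵒᵈ) <| hupper.mono fun n hn =>
      show u (n + 1) - q * v (n + 1) ≤ u n - q * v n by linarith
  exact le_liminf_div_of_isBoundedUnder_ge_sub_mul hv hsub_ge
    (isBoundedUnder_le_div_of_isBoundedUnder_le_sub_mul hv hsub_le)

theorem mul_crossing_add_gap_le_crossing {p L V d dmax : ℝ} (hp : 0 < p) (hV : 0 < V)
    (hdmax : 0 < dmax) (hVle : V ≤ L * (1 - p) / (p * dmax)) (hd : d ≤ dmax) :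
    p * (L / V + d) ≤ L / V := by
  have hgap : p * dmax ≤ L * (1 - p) / V :=
    (le_div_comm₀ hV (mul_pos hp hdmax)).1 hVle
  calc p * (L / V + d) ≤ p * (L / V) + p * dmax := by rw [mul_add]; gcongr
    _ ≤ p * (L / V) + L * (1 - p) / V := by gcongr
    _ = L / V := by ring

theorem liminf_coverage_ge_of_eventually_min_speed_general {p t₁ : ℝ} {Δ δ : ℕ → ℝ}
    (hδ : ∀ᶠ i in atTop, 0 ≤ δ i)
    (hcycle : ∀ᶠ i in atTop, p * (Δ i + δ i) ≤ Δ i)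
    (htime : Tendsto (fun k => ∑ i ∈ Finset.range k, (Δ i + δ i)) atTop atTop) :
    liminf
        (fun k : ℕ =>
          (∑ i ∈ Finset.range k, Δ i) /
            (t₁ + ∑ i ∈ Finset.range k, (Δ i + δ i)))
        atTop ≥ p := by
  refine le_liminf_div_of_eventually_mul_sub_le_sub (q := 1)
    (tendsto_atTop_add_const_left _ t₁ htime) ?_ ?_
  · filter_upwards [hcycle] with k hk
    simpa only [Finset.sum_range_succ, add_sub_add_left_eq_sub, add_sub_cancel_left] using hk
  · filter_upwards [hδ] with k hk
    simpa only [Finset.sum_range_succ, add_sub_add_left_eq_sub, add_sub_cancel_left, one_mul,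
      le_add_iff_nonneg_right] using hk

/-- If the crossing times `Δ_i` are positive, bounded by `Δ_MAX`,
and equal to `L/V_MIN` from index `k₀` onward, with `0 < V_MIN ≤ L(1−p*)/(p*·δ_MAX)`
and gaps `0 < δ_j ≤ δ_MAX`, then the coverage ratios
`p_k = (Σ_{i<k} Δ_i)/(t₁ + Σ_{i<k} (Δ_i + δ_i))` satisfy `liminf p_k ≥ p*`. -/
theorem liminf_coverage_ge_of_eventually_min_speed
    (pstar L δMAX t1 VMIN ΔMAX : ℝ) (k0 : ℕ)
    (hp : pstar ∈ Set.Ioo (0 : ℝ) 1) (hL : 0 < L) (hδMAX : 0 < δMAX)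
    (ht1 : 0 < t1) (hVpos : 0 < VMIN) (hk0 : 0 < k0)
    (hV : VMIN ≤ L * (1 - pstar) / (pstar * δMAX))
    (Δ : ℕ → ℝ) (hΔpos : ∀ i, 0 < Δ i) (hΔle : ∀ i, Δ i ≤ ΔMAX)
    (hΔeq : ∀ i, k0 ≤ i → Δ i = L / VMIN)
    (δ : ℕ → ℝ) (hδpos : ∀ j, 0 < δ j) (hδ : ∀ j, δ j ≤ δMAX) :
    liminf
        (fun k : ℕ =>
          (∑ i ∈ Finset.range k, Δ i) /
            (t1 + ∑ i ∈ Finset.range k, (Δ i + δ i)))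
        atTop ≥ pstar := by
  have hΔ : ∀ᶠ i in atTop, Δ i = L / VMIN := eventually_atTop.2 ⟨k0, hΔeq⟩
  exact liminf_coverage_ge_of_eventually_min_speed_general
    (.of_forall fun i => (hδpos i).le)
    (hΔ.mono fun i hi => hi ▸ mul_crossing_add_gap_le_crossing hp.1 hVpos hδMAX hV (hδ i))
    (tendsto_sum_range_atTop_of_eventually_ge (div_pos hL hVpos) <|
      hΔ.mono fun i hi => hi ▸ le_add_of_nonneg_right (hδpos i).le)
end

section
/- Let p* ∈ (0, 1), t_1 > 0, 0 < Δ_MIN ≤ Δ_MAX, and let (δ_j) be a sequence with 0 < δ_MIN ≤ δ_j ≤ δ_MAX < ∞ for all j. Assume Δ_MAX/(Δ_MAX + δ_MAX) ≥ p* and Δ_MIN/(Δ_MIN + δ_MIN) ≤ p*. Define the crossing times recursively (the min-max algorithm): Δ_1 = Δ_MAX, and for k ≥ 2, Δ_k = Δ_MAX if p(t_{2k−1}) ≤ p* and Δ_k = Δ_MIN otherwise, where p(t_{2k+1}) = (Σ_{i=1}^k Δ_i)/(t_1 + Σ_{i=1}^k (Δ_i + δ_i)) and p(t_{2k}) = (Σ_{i=1}^k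 Δ_i)/(t_1 + Σ_{i=1}^k Δ_i + Σ_{j=1}^{k−1} δ_j). Then lim_{j→∞} p(t_j) = p*. -/
/-!
Multiply `p(t) - p*` by the elapsed time: the resulting surplus of covered time over its target
changes by a bounded amount in each cycle, and the speed conditions make sure that this change
never has the same sign as the surplus. Hence the surplus stays bounded, while the elapsed time
tends to infinity.
-/

open Filter

open Asymptotics Topology

theorem tendsto_of_tendsto_two_mul_of_tendsto_two_mul_add_one {α : Type*} {u : ℕ → α} {l : Filter α}
    (heven : Tendsto (fun k ↦ u (2 * k)) atTop l)
    (hodd : Tendsto (fun k ↦ u (2 * k + 1)) atTop l) : Tendsto u atTop l := by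
  intro s hs
  obtain ⟨a, ha⟩ := eventually_atTop.1 (heven hs)
  obtain ⟨b, hb⟩ := eventually_atTop.1 (hodd hs)
  refine eventually_atTop.2 ⟨2 * (a + b), fun n hn ↦ ?_⟩
  obtain ⟨k, rfl | rfl⟩ := n.even_or_odd'
  · exact ha k (by omega)
  · exact hb k (by omega)

theorem tendsto_atTop_of_eventually_add_le {G : Type*} [AddCommGroup G] [LinearOrder G]
    [IsOrderedAddMonoid G] [Archimedean G] {u : ℕ → G} {c : G} (hc : 0 < c)
    (hu : ∀ᶠ k in atTop, u k + c ≤ u (k + 1)) : Tendsto u atTop atTop := by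
  obtain ⟨K, hK⟩ := eventually_atTop.1 hu
  have hlinear (n : ℕ) : u K + n • c ≤ u (n + K) := by
    induction n with
    | zero => simp
    | succ n ih =>
      calc u K + (n + 1) • c = u K + n • c + c := by rw [succ_nsmul, add_assoc]
        _ ≤ u (n + K) + c := by gcongr
        _ ≤ u (n + K + 1) := hK _ (by omega)
        _ = u (n + 1 + K) := by rw [Nat.add_right_comm]
  rw [← tendsto_add_atTop_iff_nat K]
  exact tendsto_atTop_mono hlinear
    (tendsto_atTop_add_const_left _ _ (tendsto_id.atTop_nsmul_const hc))

theorem isBigO_one_of_eventually_self_correcting {e : ℕ → ℝ}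
    (hstep : (fun k ↦ e (k + 1) - e k) =O[atTop] fun _ ↦ (1 : ℝ))
    (hup : ∀ᶠ k in atTop, e k ≤ 0 → e k ≤ e (k + 1))
    (hdown : ∀ᶠ k in atTop, 0 < e k → e (k + 1) ≤ e k) :
    e =O[atTop] fun _ ↦ (1 : ℝ) := by
  obtain ⟨C, hC⟩ := hstep.bound
  obtain ⟨K, hK⟩ := eventually_atTop.1 (hC.and (hup.and hdown))
  refine .of_bound (max |e K| C) (eventually_atTop.2 ⟨K, fun k hk ↦ ?_⟩)
  rw [norm_one, mul_one, Real.norm_eq_abs]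
  induction k, hk using Nat.le_induction with
  | base => exact le_max_left _ _
  | succ k hk ih =>
    obtain ⟨hjump, hup, hdown⟩ := hK k hk
    rw [norm_one, mul_one, Real.norm_eq_abs, abs_le] at hjump
    have hCmax : C ≤ max |e K| C := le_max_right _ _
    rw [abs_le] at ih ⊢
    rcases le_or_gt (e k) 0 with hneg | hpos
    · have := hup hneg
      constructor <;> linarith
    · have := hdown hpos
      constructor <;> linarith

theorem tendsto_div_of_isBigO_one_sub_mul {ι : Type*} {l : Filter ι} {s T : ι → ℝ} {q : ℝ}
    (hT : Tendsto T l atTop) (hs : (fun i ↦ s i - q * T i) =O[l] fun _ ↦ (1 : ℝ)) :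
    Tendsto (fun i ↦ s i / T i) l (𝓝 q) := by
  have hsmall : (fun i ↦ s i - q * T i) =o[l] T :=
    hs.trans_isLittleO ((isLittleO_one_left_iff ℝ).2 (tendsto_norm_atTop_atTop.comp hT))
  rw [← tendsto_sub_nhds_zero_iff]
  refine hsmall.tendsto_div_nhds_zero.congr' ?_
  filter_upwards [hT.eventually_ne_atTop 0] with i hi
  rw [sub_div, mul_div_cancel_right₀ q hi]

theorem isBigO_one_of_eventually_mem_Icc {ι : Type*} {l : Filter ι} {f : ι → ℝ} {a b : ℝ}
    (hf : ∀ᶠ i in l, f i ∈ Set.Icc a b) : f =O[l] fun _ ↦ (1 : ℝ) := by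
  refine .of_bound (max |a| |b|) (hf.mono fun i hi ↦ ?_)
  rw [norm_one, mul_one]
  exact abs_le_max_abs_abs hi.1 hi.2

theorem mul_add_le_of_le_div_add {q a b B : ℝ} (ha : 0 ≤ a) (hab : 0 < a + b) (hb : b ≤ B)
    (hq : q ≤ a / (a + B)) : q * (a + b) ≤ a := by
  rw [← le_div_iff₀ hab]
  exact hq.trans (by gcongr)

theorem le_mul_add_of_div_add_le {q a b B : ℝ} (ha : 0 ≤ a) (haB : 0 < a + B) (hb : B ≤ b)
    (hq : a / (a + B) ≤ q) : a ≤ q * (a + b) := by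
  rw [← div_le_iff₀ (by linarith)]
  exact le_trans (by gcongr) hq

/-- The total length of the first `k` crossings; cycles are numbered from `1`, so `Δ 0` is
ignored. -/
noncomputable def coveredTime (Δ : ℕ → ℝ) (k : ℕ) : ℝ :=
  ∑ i ∈ Finset.Icc 1 k, Δ i

/-- The time `t_{2k+1}` at which the first `k` cycles, each a crossing followed by a gap, are
over. -/
noncomputable def elapsedTime (t₁ : ℝ) (Δ δ : ℕ → ℝ) (k : ℕ) : ℝ :=
  t₁ + ∑ i ∈ Finset.Icc 1 k, (Δ i + δ i)

/-- The excess, after `k` full cycles, of the covered time over the fraction `q` of the elapsed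
time: the quantity whose boundedness drives the convergence of the coverage ratio to `q`. -/
noncomputable def coverageSurplus (q t₁ : ℝ) (Δ δ : ℕ → ℝ) (k : ℕ) : ℝ :=
  coveredTime Δ k - q * elapsedTime t₁ Δ δ k

section Cycles

variable {q t₁ : ℝ} {Δ δ : ℕ → ℝ}

theorem elapsedTime_succ (t₁ : ℝ) (Δ δ : ℕ → ℝ) (k : ℕ) :
    elapsedTime t₁ Δ δ (k + 1) = elapsedTime t₁ Δ δ k + (Δ (k + 1) + δ (k + 1)) := by
  rw [elapsedTime, elapsedTime, Finset.sum_Icc_succ_top (by omega), add_assoc]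

theorem elapsedTime_sub_gap (t₁ : ℝ) (Δ δ : ℕ → ℝ) {k : ℕ} (hk : 1 ≤ k) :
    elapsedTime t₁ Δ δ k - δ k =
      t₁ + ∑ i ∈ Finset.Icc 1 k, Δ i + ∑ j ∈ Finset.Icc 1 (k - 1), δ j := by
  obtain ⟨k, rfl⟩ := Nat.exists_eq_add_of_le' hk
  rw [elapsedTime, Finset.sum_add_distrib, Finset.sum_Icc_succ_top (by omega) δ,
    Nat.add_sub_cancel]
  ring

theorem coverageSurplus_succ_sub (q t₁ : ℝ) (Δ δ : ℕ → ℝ) (k : ℕ) :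
    coverageSurplus q t₁ Δ δ (k + 1) - coverageSurplus q t₁ Δ δ k =
      Δ (k + 1) - q * (Δ (k + 1) + δ (k + 1)) := by
  rw [coverageSurplus, coverageSurplus, elapsedTime_succ, coveredTime, coveredTime,
    Finset.sum_Icc_succ_top (by omega)]
  ring

theorem div_elapsedTime_le_iff {k : ℕ} (hk : 0 < elapsedTime t₁ Δ δ k) :
    coveredTime Δ k / elapsedTime t₁ Δ δ k ≤ q ↔ coverageSurplus q t₁ Δ δ k ≤ 0 := by
  rw [div_le_iff₀ hk, coverageSurplus, sub_nonpos]

theorem isBigO_one_coverageSurplus_of_feedback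
    (hΔ : Δ =O[atTop] fun _ ↦ (1 : ℝ)) (hδ : δ =O[atTop] fun _ ↦ (1 : ℝ))
    (hT : Tendsto (elapsedTime t₁ Δ δ) atTop atTop)
    (hlow : ∀ᶠ k in atTop, coveredTime Δ k / elapsedTime t₁ Δ δ k ≤ q →
      q * (Δ (k + 1) + δ (k + 1)) ≤ Δ (k + 1))
    (hhigh : ∀ᶠ k in atTop, q < coveredTime Δ k / elapsedTime t₁ Δ δ k →
      Δ (k + 1) ≤ q * (Δ (k + 1) + δ (k + 1))) :
    coverageSurplus q t₁ Δ δ =O[atTop] fun _ ↦ (1 : ℝ) := by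
  apply isBigO_one_of_eventually_self_correcting
  · simp only [coverageSurplus_succ_sub]
    exact (hΔ.sub ((hΔ.add hδ).const_mul_left q)).comp_tendsto (tendsto_add_atTop_nat 1)
  · filter_upwards [hlow, hT.eventually_gt_atTop 0] with k hlow hTk hsurplus
    rw [← sub_nonneg, coverageSurplus_succ_sub, sub_nonneg]
    exact hlow ((div_elapsedTime_le_iff hTk).2 hsurplus)
  · filter_upwards [hhigh, hT.eventually_gt_atTop 0] with k hhigh hTk hsurplus
    rw [← sub_nonpos, coverageSurplus_succ_sub, sub_nonpos]
    exact hhigh (lt_of_not_ge fun h ↦ hsurplus.not_ge ((div_elapsedTime_le_iff hTk).1 h))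

theorem tendsto_coveredTime_div_elapsedTime_sub_gap (hδ : δ =O[atTop] fun _ ↦ (1 : ℝ))
    (hT : Tendsto (elapsedTime t₁ Δ δ) atTop atTop)
    (hsurplus : coverageSurplus q t₁ Δ δ =O[atTop] fun _ ↦ (1 : ℝ)) :
    Tendsto (fun k ↦ coveredTime Δ k / (elapsedTime t₁ Δ δ k - δ k)) atTop (𝓝 q) := by
  obtain ⟨C, hC⟩ := hδ.bound
  refine tendsto_div_of_isBigO_one_sub_mul ?_ ?_
  · refine tendsto_atTop_add_right_of_le' _ (-C) hT (hC.mono fun k hk ↦ ?_)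
    rw [norm_one, mul_one, Real.norm_eq_abs] at hk
    exact neg_le_neg (le_of_abs_le hk)
  · refine (hsurplus.add (hδ.const_mul_left q)).congr_left fun k ↦ ?_
    rw [coverageSurplus]
    ring

end Cycles

theorem minmax_coverage_tendsto_general
    (pstar t1 ΔMIN ΔMAX δMIN δMAX : ℝ)
    (hΔMIN : 0 ≤ ΔMIN) (hΔle : ΔMIN ≤ ΔMAX) (hδMIN : 0 < δMIN)
    (δ : ℕ → ℝ) (hδ : ∀ j, δMIN ≤ δ j ∧ δ j ≤ δMAX)
    (hmax : pstar ≤ ΔMAX / (ΔMAX + δMAX))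
    (hmin : ΔMIN / (ΔMIN + δMIN) ≤ pstar)
    (Δ p : ℕ → ℝ)
    (hΔk : ∀ k, 2 ≤ k →
      Δ k = if p (2 * k - 1) ≤ pstar then ΔMAX else ΔMIN)
    (hp_even : ∀ k, 1 ≤ k →
      p (2 * k) = (∑ i ∈ Finset.Icc 1 k, Δ i) /
        (t1 + ∑ i ∈ Finset.Icc 1 k, Δ i + ∑ j ∈ Finset.Icc 1 (k - 1), δ j))
    (hp_odd : ∀ k, 1 ≤ k →
      p (2 * k + 1) = (∑ i ∈ Finset.Icc 1 k, Δ i) /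
        (t1 + ∑ i ∈ Finset.Icc 1 k, (Δ i + δ i))) :
    Tendsto p atTop (𝓝 pstar) := by
  have hrule : ∀ᶠ k in atTop, Δ (k + 1) =
      if coveredTime Δ k / elapsedTime t1 Δ δ k ≤ pstar then ΔMAX else ΔMIN := by
    filter_upwards [eventually_ge_atTop 1] with k hk
    rw [hΔk (k + 1) (by omega), show 2 * (k + 1) - 1 = 2 * k + 1 by omega, hp_odd k hk]
    rfl
  have hΔmem : ∀ᶠ k in atTop, Δ k ∈ Set.Icc ΔMIN ΔMAX := by
    filter_upwards [eventually_ge_atTop 2] with k hk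
    rw [hΔk k hk]
    split_ifs
    exacts [Set.right_mem_Icc.2 hΔle, Set.left_mem_Icc.2 hΔle]
  have hΔO : Δ =O[atTop] fun _ ↦ (1 : ℝ) := isBigO_one_of_eventually_mem_Icc hΔmem
  have hδO : δ =O[atTop] fun _ ↦ (1 : ℝ) := isBigO_one_of_eventually_mem_Icc (.of_forall hδ)
  have hT : Tendsto (elapsedTime t1 Δ δ) atTop atTop := by
    refine tendsto_atTop_of_eventually_add_le hδMIN ?_
    filter_upwards [(tendsto_add_atTop_nat 1).eventually hΔmem] with k hk
    rw [elapsedTime_succ]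
    linarith [hk.1, (hδ (k + 1)).1]
  have hsurplus : coverageSurplus pstar t1 Δ δ =O[atTop] fun _ ↦ (1 : ℝ) := by
    apply isBigO_one_coverageSurplus_of_feedback hΔO hδO hT
    · filter_upwards [hrule] with k hk hlow
      rw [hk, if_pos hlow]
      exact mul_add_le_of_le_div_add (by linarith) (by linarith [hδ (k + 1)]) (hδ (k + 1)).2 hmax
    · filter_upwards [hrule] with k hk hhigh
      rw [hk, if_neg hhigh.not_ge]
      exact le_mul_add_of_div_add_le hΔMIN (by linarith) (hδ (k + 1)).1 hmin
  apply tendsto_of_tendsto_two_mul_of_tendsto_two_mul_add_one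
  · refine (tendsto_coveredTime_div_elapsedTime_sub_gap hδO hT hsurplus).congr' ?_
    filter_upwards [eventually_ge_atTop 1] with k hk
    rw [hp_even k hk, elapsedTime_sub_gap t1 Δ δ hk, coveredTime]
  · refine (tendsto_div_of_isBigO_one_sub_mul hT hsurplus).congr' ?_
    filter_upwards [eventually_ge_atTop 1] with k hk
    exact (hp_odd k hk).symm

/-- Under the min-max algorithm (`Δ₁ = Δ_MAX`; `Δ_k = Δ_MAX` if the
coverage ratio `p(t_{2k−1}) ≤ p*` and `Δ_k = Δ_MIN` otherwise), with bounded gaps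
and the speed conditions `Δ_MAX/(Δ_MAX + δ_MAX) ≥ p*` and
`Δ_MIN/(Δ_MIN + δ_MIN) ≤ p*`, the coverage ratios converge: `p(t_j) → p*`. -/
theorem minmax_coverage_tendsto
    (pstar t1 ΔMIN ΔMAX δMIN δMAX : ℝ)
    (hp : pstar ∈ Set.Ioo (0 : ℝ) 1) (ht1 : 0 < t1)
    (hΔMIN : 0 < ΔMIN) (hΔle : ΔMIN ≤ ΔMAX)
    (hδMIN : 0 < δMIN) (hδle : δMIN ≤ δMAX)
    (δ : ℕ → ℝ) (hδ : ∀ j, δMIN ≤ δ j ∧ δ j ≤ δMAX)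
    (hmax : ΔMAX / (ΔMAX + δMAX) ≥ pstar)
    (hmin : ΔMIN / (ΔMIN + δMIN) ≤ pstar)
    (Δ p : ℕ → ℝ)
    (hΔ1 : Δ 1 = ΔMAX)
    (hΔk : ∀ k, 2 ≤ k →
      Δ k = if p (2 * k - 1) ≤ pstar then ΔMAX else ΔMIN)
    (hp_even : ∀ k, 1 ≤ k →
      p (2 * k) = (∑ i ∈ Finset.Icc 1 k, Δ i) /
        (t1 + ∑ i ∈ Finset.Icc 1 k, Δ i + ∑ j ∈ Finset.Icc 1 (k - 1), δ j))
    (hp_odd : ∀ k, 1 ≤ k →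
      p (2 * k + 1) = (∑ i ∈ Finset.Icc 1 k, Δ i) /
        (t1 + ∑ i ∈ Finset.Icc 1 k, (Δ i + δ i))) :
    Tendsto p atTop (nhds pstar) := by
  exact minmax_coverage_tendsto_general pstar t1 ΔMIN ΔMAX δMIN δMAX hΔMIN.le hΔle hδMIN δ hδ
    hmax hmin Δ p hΔk hp_even hp_odd
end
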